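/- Let δ ≥ 2 and let Σ = {A, H, T, X} be a four-element set. Let B₀ be the set of multisets of size δ over Σ that contain at least one X, or contain at least one H and at least one T. Call a δ-tuple (S₁,…,S_δ) of nonempty subsets of Σ closed if for every choice x₁ ∈ S₁, …, x_δ ∈ S_δ the multiset {x₁,…,x_δ} belongs to B₀; order such tuples by (S₁,…,S_δ) ≤ (S′₁,…,S′_δ) iff there is a permutation π with S_i ⊆ S′_{π(i)} for all i. Then the maximal closed tuples are exactly, up to permutation of coordinates: ({X}, Σ, …, Σ) (one coordinate {X} and δ−1 coordinates Σ) and ({H,X}, {T,X}, Σ, …, Σ) (one coordinate {H,X}, one coordinate {T,X}, and δ−2 coordinates Σ). -/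

import Mathlib

/-- The four-letter alphabet `Σ = {A, H, T, X}`. -/
inductive Sig : Type
  | A | H | T | X
deriving DecidableEq

instance : Fintype Sig :=
  ⟨{Sig.A, Sig.H, Sig.T, Sig.X}, fun x => by cases x <;> simp⟩

/-- The multiset of values of a tuple. -/
def tupleMultiset {n : ℕ} (f : Fin n → Sig) : Multiset Sig :=
  (Finset.univ : Finset (Fin n)).val.map f

/-- Membership in the black constraint `B₀` of `FDSO(s)`: the multiset contains at least one
`X`, or at least one `H` and at least one `T`. -/
def InB0 (m : Multiset Sig) : Prop :=
  Sig.X ∈ m ∨ (Sig.H ∈ m ∧ Sig.T ∈ m)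

/-- A tuple of subsets of `Σ` is closed if every choice from the sets gives a multiset
in `B₀`. -/
def ClosedB0 {δ : ℕ} (S : Fin δ → Set Sig) : Prop :=
  ∀ f : Fin δ → Sig, (∀ i, f i ∈ S i) → InB0 (tupleMultiset f)

/-- `S ≤ S'` iff there is a permutation `π` with `S i ⊆ S' (π i)` for all `i`. -/
def TupLE {δ : ℕ} (S S' : Fin δ → Set Sig) : Prop :=
  ∃ π : Equiv.Perm (Fin δ), ∀ i, S i ⊆ S' (π i)

/-- Two tuples are equal up to a permutation of coordinates. -/
def PermEq {δ : ℕ} (S S' : Fin δ → Set Sig) : Prop :=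
  ∃ π : Equiv.Perm (Fin δ), ∀ i, S i = S' (π i)

theorem inB0_iff {n : ℕ} (f : Fin n → Sig) : InB0 (tupleMultiset f) ↔
    (∃ i, f i = Sig.X) ∨ ((∃ i, f i = Sig.H) ∧ ∃ i, f i = Sig.T) := by
  simp [InB0, tupleMultiset]

theorem closed_mono {n : ℕ} {S S' : Fin n → Set Sig} (h : TupLE S S') (hc : ClosedB0 S') :
    ClosedB0 S := by
  obtain ⟨p, hp⟩ := h
  intro f hf
  have h1 := hc (fun i => f (p.symm i)) (fun i => by
    have := hp (p.symm i) (hf _)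
    simpa using this)
  rw [inB0_iff] at h1 ⊢
  rcases h1 with ⟨i, hi⟩ | ⟨⟨i, hi⟩, ⟨j, hj⟩⟩
  · exact Or.inl ⟨_, hi⟩
  · exact Or.inr ⟨⟨_, hi⟩, ⟨_, hj⟩⟩

theorem tupLE_trans {n : ℕ} {S S' S'' : Fin n → Set Sig} (h : TupLE S S') (h' : TupLE S' S'') :
    TupLE S S'' := by
  obtain ⟨p, hp⟩ := h
  obtain ⟨q, hq⟩ := h'
  exact ⟨p.trans q, fun i => (hp i).trans (hq (p i))⟩

theorem permEq_le {n : ℕ} {S S' : Fin n → Set Sig} (h : PermEq S S') :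
    TupLE S S' ∧ TupLE S' S := by
  obtain ⟨p, hp⟩ := h
  refine ⟨⟨p, fun i => (hp i).le⟩, ⟨p.symm, fun i => ?_⟩⟩
  rw [hp]
  simp

theorem tupLE_sum {n : ℕ} {S S' : Fin n → Set Sig} (h : TupLE S S') :
    ∑ i, (S i).ncard ≤ ∑ i, (S' i).ncard := by
  obtain ⟨p, hp⟩ := h
  rw [← Equiv.sum_comp p (fun i => (S' i).ncard)]
  exact Finset.sum_le_sum fun i _ => Set.ncard_le_ncard (hp i) (Set.toFinite _)

theorem tupLE_antisymm {n : ℕ} {S S' : Fin n → Set Sig} (h : TupLE S S') (h' : TupLE S' S) :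
    PermEq S S' := by
  have h2 := tupLE_sum h'
  obtain ⟨p, hp⟩ := h
  refine ⟨p, fun i => ?_⟩
  rw [← Equiv.sum_comp p (fun i => (S' i).ncard)] at h2
  have hle : ∀ i ∈ Finset.univ, (S i).ncard ≤ (S' (p i)).ncard :=
    fun i _ => Set.ncard_le_ncard (hp i) (Set.toFinite _)
  have h3 := (Finset.sum_eq_sum_iff_of_le hle).1 (le_antisymm (Finset.sum_le_sum hle) h2)
  exact Set.eq_of_subset_of_ncard_le (hp i) (h3 i (Finset.mem_univ i)).ge (Set.toFinite _)

def tupU {n : ℕ} (a : Fin n) : Fin n → Set Sig :=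
  fun i => if i = a then ({Sig.X} : Set Sig) else Set.univ

def tupV {n : ℕ} (a b : Fin n) : Fin n → Set Sig :=
  fun i => if i = a then ({Sig.H, Sig.X} : Set Sig)
    else if i = b then ({Sig.T, Sig.X} : Set Sig) else Set.univ

theorem closed_U {n : ℕ} (a : Fin n) : ClosedB0 (tupU a) := by
  intro f hf
  rw [inB0_iff]
  have := hf a
  simp [tupU] at this
  exact Or.inl ⟨a, this⟩

theorem closed_V {n : ℕ} (a b : Fin n) (hab : a ≠ b) : ClosedB0 (tupV a b) := by
  intro f hf
  rw [inB0_iff]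
  have h1 := hf a
  have h2 := hf b
  simp [tupV, hab.symm] at h1 h2
  rcases h1 with h1 | h1
  · rcases h2 with h2 | h2
    · exact Or.inr ⟨⟨a, h1⟩, ⟨b, h2⟩⟩
    · exact Or.inl ⟨b, h2⟩
  · exact Or.inl ⟨a, h1⟩

theorem not_U_le_V {n : ℕ} (a b : Fin n) (hab : a ≠ b) : ¬ TupLE (tupU a) (tupV a b) := by
  rintro ⟨p, hp⟩
  by_cases h : p.symm a = a
  · have hb : p.symm b ≠ a := fun h' => hab (p.symm.injective (h.trans h'.symm))
    have := hp (p.symm b) (show Sig.A ∈ _ by simp [tupU, hb])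
    simp [tupV, hab.symm] at this
  · have := hp (p.symm a) (show Sig.A ∈ _ by simp [tupU, h])
    simp [tupV] at this

theorem not_V_le_U {n : ℕ} (a b : Fin n) : ¬ TupLE (tupV a b) (tupU a) := by
  rintro ⟨p, hp⟩
  have key : Sig.H ∈ tupV a b (p.symm a) ∨ Sig.T ∈ tupV a b (p.symm a) := by
    unfold tupV
    split_ifs <;> simp
  rcases key with h | h
  · have := hp _ h
    simp [tupU] at this
  · have := hp _ h
    simp [tupU] at this

theorem cover {n : ℕ} (a b : Fin n) (hab : a ≠ b) (S : Fin n → Set Sig)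
    (hc : ClosedB0 S) : TupLE S (tupU a) ∨ TupLE S (tupV a b) := by
  by_cases hX : ∃ i, S i ⊆ {Sig.X}
  · left
    obtain ⟨i, hi⟩ := hX
    refine ⟨Equiv.swap i a, fun k => ?_⟩
    by_cases hk : k = i
    · subst hk
      simpa [tupU] using hi
    · have : Equiv.swap i a k ≠ a := fun h => hk ((Equiv.swap i a).injective (by simpa using h))
      simp [tupU, this]
  · right
    have hX' : ∀ i, ∃ x ∈ S i, x ≠ Sig.X := by
      intro i
      by_contra hcon
      push Not at hcon
      exact hX ⟨i, fun x hx => by simpa using hcon x hx⟩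
    have h1 : ∃ i, S i ⊆ {Sig.H, Sig.X} := by
      by_contra hcon
      push Not at hcon
      have : ∀ i, ∃ x ∈ S i, x ≠ Sig.H ∧ x ≠ Sig.X := by
        intro i
        obtain ⟨x, hx, hx'⟩ := Set.not_subset.1 (hcon i)
        exact ⟨x, hx, by simpa using hx'⟩
      choose f hf hf' using this
      rcases (inB0_iff f).1 (hc f hf) with ⟨i, hi⟩ | ⟨⟨i, hi⟩, _⟩
      · exact (hf' i).2 hi
      · exact (hf' i).1 hi
    have h2 : ∃ i, S i ⊆ {Sig.T, Sig.X} := by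
      by_contra hcon
      push Not at hcon
      have : ∀ i, ∃ x ∈ S i, x ≠ Sig.T ∧ x ≠ Sig.X := by
        intro i
        obtain ⟨x, hx, hx'⟩ := Set.not_subset.1 (hcon i)
        exact ⟨x, hx, by simpa using hx'⟩
      choose f hf hf' using this
      rcases (inB0_iff f).1 (hc f hf) with ⟨i, hi⟩ | ⟨_, ⟨i, hi⟩⟩
      · exact (hf' i).2 hi
      · exact (hf' i).1 hi
    obtain ⟨i, hi⟩ := h1
    obtain ⟨j, hj⟩ := h2
    have hij : i ≠ j := by
      rintro rfl
      obtain ⟨x, hx, hx'⟩ := hX' i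
      have e1 := hi hx
      have e2 := hj hx
      cases x <;> simp_all
    have hp : ∃ p : Equiv.Perm (Fin n), p i = a ∧ p j = b := by
      refine ⟨(Equiv.swap i a).trans (Equiv.swap (Equiv.swap i a j) b), ?_, by simp⟩
      have : a ≠ Equiv.swap i a j := fun h =>
        hij ((Equiv.swap i a).injective (by simpa using h))
      simp [Equiv.swap_apply_of_ne_of_ne this hab]
    obtain ⟨p, hpi, hpj⟩ := hp
    refine ⟨p, fun k => ?_⟩
    unfold tupV
    split_ifs with ha hb
    · rw [p.injective (ha.trans hpi.symm)]
      exact hi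
    · rw [p.injective (hb.trans hpj.symm)]
      exact hj
    · exact Set.subset_univ _

theorem nonempty_U {n : ℕ} (a : Fin n) (i : Fin n) : (tupU a i).Nonempty :=
  ⟨Sig.X, by unfold tupU; split_ifs <;> simp⟩

theorem nonempty_V {n : ℕ} (a b : Fin n) (i : Fin n) : (tupV a b i).Nonempty :=
  ⟨Sig.X, by unfold tupV; split_ifs <;> simp⟩

theorem main_aux {n : ℕ} (a b : Fin n) (hab : a ≠ b) (S : Fin n → Set Sig) :
    (ClosedB0 S ∧ ∀ S' : Fin n → Set Sig, (∀ i, (S' i).Nonempty) → ClosedB0 S' →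
        TupLE S S' → TupLE S' S) ↔ (PermEq S (tupU a) ∨ PermEq S (tupV a b)) := by
  constructor
  · rintro ⟨hc, hm⟩
    rcases cover a b hab S hc with h | h
    · exact Or.inl (tupLE_antisymm h (hm _ (nonempty_U a) (closed_U a) h))
    · exact Or.inr (tupLE_antisymm h (hm _ (nonempty_V a b) (closed_V a b hab) h))
  · rintro (h | h)
    · obtain ⟨h1, h2⟩ := permEq_le h
      refine ⟨closed_mono h1 (closed_U a), fun S' _ hc hle => ?_⟩
      rcases cover a b hab S' hc with h3 | h3
      · exact tupLE_trans h3 h2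
      · exact absurd (tupLE_trans h2 (tupLE_trans hle h3)) (not_U_le_V a b hab)
    · obtain ⟨h1, h2⟩ := permEq_le h
      refine ⟨closed_mono h1 (closed_V a b hab), fun S' _ hc hle => ?_⟩
      rcases cover a b hab S' hc with h3 | h3
      · exact absurd (tupLE_trans h2 (tupLE_trans hle h3)) (not_V_le_U a b)
      · exact tupLE_trans h3 h2

/-- For `δ ≥ 2`, the maximal closed `δ`-tuples of nonempty subsets of `Σ` for
the black constraint of `FDSO(s)` are exactly, up to permutation of coordinates,
`({X}, Σ, …, Σ)` and `({H,X}, {T,X}, Σ, …, Σ)`. -/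
theorem stmt_12 (δ : ℕ) (hδ : 2 ≤ δ) (S : Fin δ → Set Sig)
    (hS : ∀ i, (S i).Nonempty) :
    (ClosedB0 S ∧ ∀ S' : Fin δ → Set Sig, (∀ i, (S' i).Nonempty) → ClosedB0 S' →
        TupLE S S' → TupLE S' S) ↔
    (PermEq S (fun i => if i = (⟨0, by omega⟩ : Fin δ) then ({Sig.X} : Set Sig)
                        else Set.univ) ∨
     PermEq S (fun i => if i = (⟨0, by omega⟩ : Fin δ) then ({Sig.H, Sig.X} : Set Sig)
                        else if i = (⟨1, by omega⟩ : Fin δ) then ({Sig.T, Sig.X} : Set Sig)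
                        else Set.univ)) := by
  exact main_aux (⟨0, by omega⟩ : Fin δ) ⟨1, by omega⟩ (by simp) S
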